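/- arXiv:1612.01732 — 2 statements merged into one kernel-verified Lean document; each statement's English description precedes it below -/
import Mathlib

section
/- Let Λ be a finite simple graph that is not a linear forest. Then there exists a finite simple graph Γ such that there is an injective group homomorphism from G(Λ) into G(Γ), but Λ does not embed into Γ as a full (induced) subgraph. -/
open SimpleGraph

/-- The set of commutator relations of a graph: one commutator for each edge. -/
def raagRels {V : Type} (G : SimpleGraph V) : Set (FreeGroup V) :=
  {r | ∃ u v : V, G.Adj u v ∧
    r = FreeGroup.of u * FreeGroup.of v * (FreeGroup.of u)⁻¹ * (FreeGroup.of v)⁻¹}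

/-- The right-angled Artin group `A(G)` of a graph `G`. -/
abbrev RAAG {V : Type} (G : SimpleGraph V) : Type := PresentedGroup (raagRels G)

/-- `G(Γ) = A(Γᶜ)`, the RAAG on the complement graph. -/
abbrev GG {V : Type} (G : SimpleGraph V) : Type := RAAG Gᶜ

/-- A linear forest: an acyclic graph all of whose vertices have degree at most 2. -/
def IsLinearForest {V : Type} (G : SimpleGraph V) : Prop :=
  G.IsAcyclic ∧ ∀ v : V, (G.neighborSet v).ncard ≤ 2

/-- The star of a vertex: the vertex together with its neighbours. -/
def starSet {V : Type} (G : SimpleGraph V) (v : V) : Set V :=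
  insert v (G.neighborSet v)

/-- The double `D_v(G)` of `G` along the star of `v`: original vertices together with
copies of the vertices outside the star. -/
def GraphDouble {V : Type} (G : SimpleGraph V) (v : V) :
    SimpleGraph (V ⊕ {w : V // w ∉ starSet G v}) :=
  SimpleGraph.fromRel (fun x y =>
    match x, y with
    | Sum.inl a, Sum.inl b => G.Adj a b
    | Sum.inr a, Sum.inr b => G.Adj a.1 b.1
    | Sum.inl a, Sum.inr b => a ∈ starSet G v ∧ G.Adj a b.1
    | Sum.inr _, Sum.inl _ => False)

/-- Subdivision of the edge `[v,w]` of `Λ`, with `none` as the new vertex. -/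
def SubdivEdge {V : Type} (Λ : SimpleGraph V) (v w : V) : SimpleGraph (Option V) :=
  SimpleGraph.fromRel (fun x y =>
    match x, y with
    | some a, some b => Λ.Adj a b ∧ ¬((a = v ∧ b = w) ∨ (a = w ∧ b = v))
    | some a, none => a = v ∨ a = w
    | none, some _ => False
    | none, none => False)

/-- The graph `Λ_u⁻(w₁,w₂)`, with `none` as the new vertex `v`. -/
def MinusGraph {V : Type} (Λ : SimpleGraph V) (u w₁ w₂ : V) : SimpleGraph (Option V) :=
  SimpleGraph.fromRel (fun x y =>
    match x, y with
    | some a, some b => Λ.Adj a b ∧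
        ¬((a = u ∧ b = w₁) ∨ (a = w₁ ∧ b = u) ∨ (a = u ∧ b = w₂) ∨ (a = w₂ ∧ b = u))
    | some a, none => a = w₁ ∨ a = u ∨ a = w₂
    | none, some _ => False
    | none, none => False)

/-- The graph `Λ_u⁺(w₁,w₂)`: `Λ_u⁻(w₁,w₂)` with the edge `[u,w₂]` added back. -/
def PlusGraph {V : Type} (Λ : SimpleGraph V) (u w₁ w₂ : V) : SimpleGraph (Option V) :=
  SimpleGraph.fromRel (fun x y =>
    (MinusGraph Λ u w₁ w₂).Adj x y ∨ (x = some u ∧ y = some w₂))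

open Classical in
theorem raag_comm {V : Type} {G : SimpleGraph V} {u v : V} (h : ¬ G.Adj u v) :
    Commute (PresentedGroup.of u : GG G) (PresentedGroup.of v) := by
  by_cases huv : u = v
  · subst huv; exact Commute.refl _
  · have h1 : PresentedGroup.mk (raagRels Gᶜ) (FreeGroup.of u * FreeGroup.of v *
        (FreeGroup.of u)⁻¹ * (FreeGroup.of v)⁻¹) = 1 := by
      apply PresentedGroup.one_of_mem
      exact ⟨u, v, by simp [huv, h], rfl⟩
    rw [map_mul, map_mul, map_mul, map_inv, map_inv, mul_inv_eq_one, mul_inv_eq_iff_eq_mul] at h1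
    exact h1

theorem raag_lift_rel {V : Type} {G : SimpleGraph V} {H : Type*} [Group H] (f : V → H)
    (h : ∀ u v, ¬ G.Adj u v → Commute (f u) (f v)) :
    ∀ r ∈ raagRels Gᶜ, FreeGroup.lift f r = 1 := by
  rintro r ⟨u, v, huv, rfl⟩
  have := h u v (by simpa using huv.2)
  simp only [map_mul, map_inv, FreeGroup.lift_apply_of]
  rw [mul_inv_eq_one, mul_inv_eq_iff_eq_mul]
  exact this

/-- The homomorphism out of `G(Γ)` given by images of the generators. -/
def raagLift {V : Type} {G : SimpleGraph V} {H : Type*} [Group H] (f : V → H)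
    (h : ∀ u v, ¬ G.Adj u v → Commute (f u) (f v)) : GG G →* H :=
  PresentedGroup.toGroup (raag_lift_rel f h)

theorem raagLift_of {V : Type} {G : SimpleGraph V} {H : Type*} [Group H] (f : V → H)
    (h : ∀ u v, ¬ G.Adj u v → Commute (f u) (f v)) (v : V) :
    raagLift f h (PresentedGroup.of v) = f v := PresentedGroup.toGroup.of _

/-- Splitting the vertex `o`: the new vertex `none` is adjacent to `o` and to the vertices in `B`,
and the edge `[o,z]` is removed. -/
def splitG {V : Type} (Λ : SimpleGraph V) (o z : V) (B : V → Prop) : SimpleGraph (Option V) where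
  Adj x y := match x, y with
    | some a, some b => Λ.Adj a b ∧ s(a, b) ≠ s(o, z)
    | some a, none => a = o ∨ B a
    | none, some a => a = o ∨ B a
    | none, none => False
  symm := ⟨by
    rintro (_ | a) (_ | b) h
    · exact h
    · exact h
    · exact h
    · exact ⟨h.1.symm, by rw [Sym2.eq_swap]; exact h.2⟩⟩
  loopless := ⟨by
    rintro (_ | a) h
    · exact h
    · exact Λ.loopless.irrefl _ h.1⟩

/-- The double graph. -/
def dblG {V : Type} (Λ : SimpleGraph V) (o z : V) (B : V → Prop) : SimpleGraph (V × Bool) where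
  Adj x y := (Λ.Adj x.1 y.1 ∧ s(x.1, y.1) ≠ s(o, z)) ∨
    ((x.1 = o ∨ B x.1) ∧ (y.1 = o ∨ B y.1) ∧ x.2 ≠ y.2)
  symm := ⟨by
    rintro a b (h | h)
    · exact Or.inl ⟨h.1.symm, by rw [Sym2.eq_swap]; exact h.2⟩
    · exact Or.inr ⟨h.2.1, h.1, h.2.2.symm⟩⟩
  loopless := ⟨by
    rintro a (h | h)
    · exact Λ.loopless.irrefl _ h.1
    · exact h.2.2 rfl⟩

open Classical in
/-- The involution of the double graph. -/
noncomputable def dblSwap {V : Type} (o : V) (B : V → Prop) (x : V × Bool) : V × Bool :=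
  if x.1 = o ∨ B x.1 then (x.1, !x.2) else x

theorem dblSwap_invol {V : Type} (o : V) (B : V → Prop) (x : V × Bool) :
    dblSwap o B (dblSwap o B x) = x := by
  unfold dblSwap
  by_cases h : x.1 = o ∨ B x.1 <;> simp [h]

theorem dblSwap_adj {V : Type} (Λ : SimpleGraph V) (o z : V) (B : V → Prop) (x y : V × Bool) :
    (dblG Λ o z B).Adj (dblSwap o B x) (dblSwap o B y) ↔ (dblG Λ o z B).Adj x y := by
  unfold dblSwap dblG
  by_cases h : x.1 = o ∨ B x.1 <;> by_cases h' : y.1 = o ∨ B y.1 <;> simp [h, h']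

/-- The involution of the group. -/
noncomputable def dblHom {V : Type} (Λ : SimpleGraph V) (o z : V) (B : V → Prop) :
    GG (dblG Λ o z B) →* GG (dblG Λ o z B) :=
  raagLift (fun x => PresentedGroup.of (dblSwap o B x)) (fun u v h => raag_comm (by
    rwa [dblSwap_adj]))

theorem dblHom_invol {V : Type} (Λ : SimpleGraph V) (o z : V) (B : V → Prop) :
    (dblHom Λ o z B).comp (dblHom Λ o z B) = MonoidHom.id _ := by
  apply PresentedGroup.ext
  intro x
  simp [dblHom, raagLift_of, dblSwap_invol]

/-- The involution as an automorphism. -/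
noncomputable def dblAut {V : Type} (Λ : SimpleGraph V) (o z : V) (B : V → Prop) :
    MulAut (GG (dblG Λ o z B)) :=
  MonoidHom.toMulEquiv (dblHom Λ o z B) (dblHom Λ o z B) (dblHom_invol _ _ _ _)
    (dblHom_invol _ _ _ _)

theorem dblAut_of {V : Type} (Λ : SimpleGraph V) (o z : V) (B : V → Prop) (x : V × Bool) :
    dblAut Λ o z B (PresentedGroup.of x) = PresentedGroup.of (dblSwap o B x) := by
  simp [dblAut, dblHom, raagLift_of]

theorem dblAut_inv_of {V : Type} (Λ : SimpleGraph V) (o z : V) (B : V → Prop) (x : V × Bool) :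
    (dblAut Λ o z B)⁻¹ (PresentedGroup.of x) = PresentedGroup.of (dblSwap o B x) := by
  rw [MulAut.inv_apply, MulEquiv.symm_apply_eq, dblAut_of, dblSwap_invol]

open Classical in
theorem split_embeds {V : Type} (Λ : SimpleGraph V) (o z : V) (B : V → Prop)
    (hz : B z) (hB : ∀ v, B v → Λ.Adj o v) :
    ∃ φ : GG Λ →* GG (splitG Λ o z B), Function.Injective φ := by
  let a : GG (splitG Λ o z B) := PresentedGroup.of (some o)
  let b : GG (splitG Λ o z B) := PresentedGroup.of none
  have key : ∀ v, v ≠ o → ¬ Λ.Adj o v →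
      Commute (b⁻¹ * a * b) (PresentedGroup.of (some v) : GG (splitG Λ o z B)) := by
    intro v hv h
    have h1 : Commute a (PresentedGroup.of (some v)) :=
      raag_comm (fun h' => h h'.1)
    have h2 : Commute b (PresentedGroup.of (some v)) :=
      raag_comm (fun h' => h'.elim hv (fun h3 => h (hB v h3)))
    exact (h2.inv_left.mul_left h1).mul_left h2
  let φ : GG Λ →* GG (splitG Λ o z B) := raagLift
    (fun v => if v = o then b⁻¹ * a * b else PresentedGroup.of (some v)) (by
      intro u v h
      by_cases hu : u = o <;> by_cases hv : v = o
      · simp [hu, hv]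
      · subst hu; simpa [hv] using key v hv h
      · subst hv; simpa [hu] using (key u hu (fun h' => h h'.symm)).symm
      · simp only [hu, hv, if_false]
        exact raag_comm (fun h' => h h'.1))
  let N := GG (dblG Λ o z B)
  let S := SemidirectProduct N (MulAut N) (MonoidHom.id _)
  let ψ : GG (splitG Λ o z B) →* S := raagLift
    (fun x => match x with
      | some v => SemidirectProduct.inl (PresentedGroup.of (v, false))
      | none => SemidirectProduct.inr (dblAut Λ o z B)) (by
      have h0 : ∀ v, ¬ (v = o ∨ B v) → Commute
          (SemidirectProduct.inl (PresentedGroup.of (v, false)) : S)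
          (SemidirectProduct.inr (dblAut Λ o z B)) := by
        intro v h
        have : (SemidirectProduct.inl (MonoidHom.id _ (dblAut Λ o z B)
          (PresentedGroup.of (v, false))) : S) = _ := SemidirectProduct.inl_aut _ _
        rw [MonoidHom.id_apply, dblAut_of, map_inv, dblSwap, if_neg h,
          eq_mul_inv_iff_mul_eq] at this
        exact this
      rintro (_ | u) (_ | v) h
      · exact Commute.refl _
      · exact (h0 v h).symm
      · exact h0 u h
      · refine Commute.map (raag_comm ?_) SemidirectProduct.inl
        rintro (h' | h')
        · exact h h'
        · exact h'.2.2 rfl)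
  let ρ : N →* GG Λ := raagLift
    (fun x => if x.1 = o then (if x.2 then PresentedGroup.of o else 1) else
      (if x.2 then 1 else PresentedGroup.of x.1)) (by
      have h0 : ∀ v, v ≠ o → ¬ (dblG Λ o z B).Adj (v, false) (o, true) → ¬ Λ.Adj v o := by
        intro v hv h h'
        apply h
        by_cases hvz : v = z
        · exact Or.inr ⟨Or.inr (hvz ▸ hz), Or.inl rfl, by simp⟩
        · refine Or.inl ⟨h', ?_⟩
          simp [hv, hvz]
      rintro ⟨u, i⟩ ⟨v, j⟩ h
      by_cases hu : u = o <;> by_cases hv : v = o <;> cases i <;> cases j <;>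
        simp only [hu, hv, if_true, if_false, Commute.one_left, Commute.one_right,
          Bool.false_eq_true, Commute.refl]
      · subst hu
        exact (raag_comm (h0 v hv (fun h' => h h'.symm))).symm
      · subst hv
        exact raag_comm (h0 u hu h)
      · refine raag_comm (fun h' => h (Or.inl ⟨h', ?_⟩))
        simp [hu, hv])
  have hcomp : ∀ g, ∃ n : N, ψ (φ g) = SemidirectProduct.inl n ∧ ρ n = g := by
    let P : Subgroup (GG Λ) :=
      { carrier := {g | ∃ n : N, ψ (φ g) = SemidirectProduct.inl n ∧ ρ n = g}
        one_mem' := ⟨1, by simp, by simp⟩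
        mul_mem' := by
          rintro _ _ ⟨n, h1, h2⟩ ⟨m, h3, h4⟩
          exact ⟨n * m, by simp [h1, h3], by simp [h2, h4]⟩
        inv_mem' := by
          rintro _ ⟨n, h1, h2⟩
          exact ⟨n⁻¹, by simp [h1], by simp [h2]⟩ }
    have hP : P = ⊤ := by
      rw [eq_top_iff, ← PresentedGroup.closure_range_of, Subgroup.closure_le]
      rintro _ ⟨v, rfl⟩
      by_cases hv : v = o
      · subst hv
        refine ⟨PresentedGroup.of (v, true), ?_, ?_⟩
        · have : (SemidirectProduct.inl (MonoidHom.id _ (dblAut Λ v z B)⁻¹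
            (PresentedGroup.of (v, false))) : S) = _ := SemidirectProduct.inl_aut _ _
          rw [MonoidHom.id_apply, dblAut_inv_of] at this
          simp only [φ, raagLift_of, if_true, map_mul, map_inv, ψ, a, b]
          simp only [dblSwap, true_or, if_true, Bool.not_false, map_inv, inv_inv] at this
          exact this.symm
        · refine (raagLift_of _ _ _).trans ?_
          simp
      · refine ⟨PresentedGroup.of (v, false), ?_, ?_⟩
        · simp [φ, ψ, raagLift_of, hv]
        · refine (raagLift_of _ _ _).trans ?_
          simp [hv]
    intro g
    have : g ∈ P := hP ▸ Subgroup.mem_top g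
    exact this
  refine ⟨φ, fun g h hgh => ?_⟩
  obtain ⟨n, h1, h2⟩ := hcomp g
  obtain ⟨m, h3, h4⟩ := hcomp h
  rw [hgh, h3] at h1
  rw [← h2, ← h4, SemidirectProduct.inl_injective h1]

/-- Every vertex of the set has two neighbours in the set. -/
def IsCore {V : Type} (G : SimpleGraph V) (S : Finset V) : Prop :=
  ∀ v ∈ S, ∃ p ∈ S, ∃ q ∈ S, p ≠ q ∧ G.Adj v p ∧ G.Adj v q

open Classical in
theorem exists_core {V : Type} [Fintype V] (G : SimpleGraph V) (h : ¬ G.IsAcyclic) :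
    ∃ S : Finset V, S.Nonempty ∧ IsCore G S := by
  unfold SimpleGraph.IsAcyclic at h
  push Not at h
  obtain ⟨v, c, hc⟩ := h
  refine ⟨c.support.toFinset, ⟨v, by simp⟩, ?_⟩
  intro w hw
  have h2 := hc.ncard_neighborSet_toSubgraph_eq_two (by simpa using hw)
  obtain ⟨p, q, hpq, hs⟩ := Set.ncard_eq_two.1 h2
  have hp : c.toSubgraph.Adj w p := by
    have : p ∈ c.toSubgraph.neighborSet w := by rw [hs]; simp
    exact this
  have hq : c.toSubgraph.Adj w q := by
    have : q ∈ c.toSubgraph.neighborSet w := by rw [hs]; simp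
    exact this
  refine ⟨p, ?_, q, ?_, hpq, hp.adj_sub, hq.adj_sub⟩
  · simpa using hp.snd_mem
  · simpa using hq.snd_mem

open Classical in
theorem case_cycle {V : Type} [Fintype V] (Λ : SimpleGraph V) (h : ¬ Λ.IsAcyclic) :
    ∃ o z, Λ.Adj o z ∧ ¬ Nonempty (Λ ↪g splitG Λ o z (fun v => v = z)) := by
  obtain ⟨S₀, hS₀, hc₀⟩ := exists_core Λ h
  obtain ⟨S, hS, hmax⟩ := Finset.exists_max_image
    (Finset.univ.filter (fun S : Finset V => IsCore Λ S)) Finset.card ⟨S₀, by simpa using hc₀⟩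
  have hSc : IsCore Λ S := by simpa using hS
  have hSn : S.Nonempty := by
    rw [← Finset.card_pos]
    exact lt_of_lt_of_le (Finset.card_pos.2 hS₀) (hmax S₀ (by simpa using hc₀))
  obtain ⟨o, ho⟩ := hSn
  obtain ⟨z, hz, -, -, -, hoz, -⟩ := hSc o ho
  refine ⟨o, z, hoz, ?_⟩
  rintro ⟨f⟩
  set Γ := splitG Λ o z (fun v => v = z) with hΓ
  let T : Finset (Option V) := insert none (S.image some)
  have hTcard : T.card = S.card + 1 := by
    rw [Finset.card_insert_of_notMem (by simp), Finset.card_image_of_injective _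
      (Option.some_injective V)]
  have hT : IsCore Γ T := by
    intro w hw
    rcases w with _ | v
    · exact ⟨some o, by simp [T, ho], some z, by simp [T, hz], by simpa using hoz.ne,
        Or.inl rfl, Or.inr rfl⟩
    · have hv : v ∈ S := by simpa [T] using hw
      obtain ⟨p, hp, q, hq, hpq, hvp, hvq⟩ := hSc v hv
      by_cases h1 : s(v, p) = s(o, z)
      · refine ⟨none, by simp [T], some q, by simp [T, hq], by simp, ?_, hvq, ?_⟩
        · have : v ∈ s(o, z) := by rw [← h1]; simp
          exact Sym2.mem_iff.1 this
        · rw [← h1]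
          intro h2
          exact hpq (Sym2.congr_right.1 h2).symm
      · by_cases h3 : s(v, q) = s(o, z)
        · refine ⟨some p, by simp [T, hp], none, by simp [T], by simp, ⟨hvp, h1⟩, ?_⟩
          have : v ∈ s(o, z) := by rw [← h3]; simp
          exact Sym2.mem_iff.1 this
        · exact ⟨some p, by simp [T, hp], some q, by simp [T, hq], by simpa using hpq,
            ⟨hvp, h1⟩, ⟨hvq, h3⟩⟩
  -- some vertex of `T` is missed by `f`
  have hx : ∃ x ∈ T, x ∉ Set.range f := by
    by_contra! hcon
    let S₁ : Finset V := Finset.univ.filter (fun v => f v ∈ T)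
    have hST : S₁.image f = T := by
      ext t
      simp only [Finset.mem_image, S₁, Finset.mem_filter, Finset.mem_univ, true_and]
      constructor
      · rintro ⟨v, hv, rfl⟩; exact hv
      · intro ht
        obtain ⟨v, rfl⟩ := hcon t ht
        exact ⟨v, ht, rfl⟩
    have hcard : S₁.card = S.card + 1 := by
      rw [← hTcard, ← hST, Finset.card_image_of_injective _ f.injective]
    have hcore : IsCore Λ S₁ := by
      intro v hv
      obtain ⟨p, hp, q, hq, hpq, h1, h2⟩ := hT (f v) (by simpa [S₁] using hv)
      obtain ⟨p, rfl⟩ := hcon p hp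
      obtain ⟨q, rfl⟩ := hcon q hq
      exact ⟨p, by simpa [S₁] using hp, q, by simpa [S₁] using hq, fun e => hpq (by rw [e]),
        f.map_adj_iff.1 h1, f.map_adj_iff.1 h2⟩
    have := hmax S₁ (by simpa using hcore)
    omega
  obtain ⟨x, hxT, hxf⟩ := hx
  obtain ⟨p, -, q, -, hpq, hxp, hxq⟩ := hT x hxT
  -- count edges
  have hle : Γ.edgeFinset.card ≤ Λ.edgeFinset.card + 1 := by
    have hsub : Γ.edgeFinset ⊆ insert s(none, some o) (insert s(none, some z)
        ((Λ.edgeFinset.erase s(o, z)).image (Sym2.map some))) := by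
      intro e
      induction e using Sym2.ind with
      | _ x y =>
      intro he
      rw [SimpleGraph.mem_edgeFinset, SimpleGraph.mem_edgeSet] at he
      simp only [Finset.mem_insert, Finset.mem_image, Finset.mem_erase,
        SimpleGraph.mem_edgeFinset]
      rcases x with _ | u <;> rcases y with _ | v
      · exact he.elim
      · rcases he with rfl | rfl <;> simp
      · rcases he with rfl | rfl <;> simp
      · exact Or.inr (Or.inr ⟨s(u, v), ⟨he.2, he.1⟩, rfl⟩)
    have h1 := Finset.card_le_card hsub
    have h2 := Finset.card_insert_le s(none, some o) (insert s(none, some z)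
        ((Λ.edgeFinset.erase s(o, z)).image (Sym2.map some)))
    have h3 := Finset.card_insert_le s(none, some z)
        ((Λ.edgeFinset.erase s(o, z)).image (Sym2.map some))
    have h4 : ((Λ.edgeFinset.erase s(o, z)).image (Sym2.map some)).card ≤ _ :=
      Finset.card_image_le
    have h5 : (Λ.edgeFinset.erase s(o, z)).card + 1 = Λ.edgeFinset.card :=
      Finset.card_erase_add_one (by simpa using hoz)
    omega
  have hge : Λ.edgeFinset.card + 2 ≤ Γ.edgeFinset.card := by
    have hsub : insert s(x, p) (insert s(x, q) (Λ.edgeFinset.image (Sym2.map f)))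
        ⊆ Γ.edgeFinset := by
      intro e
      simp only [Finset.mem_insert, Finset.mem_image]
      rintro (rfl | rfl | ⟨e, he, rfl⟩)
      · simpa using hxp
      · simpa using hxq
      · induction e using Sym2.ind with
        | _ u v =>
        rw [SimpleGraph.mem_edgeFinset, SimpleGraph.mem_edgeSet] at he
        rw [SimpleGraph.mem_edgeFinset, Sym2.map_mk, SimpleGraph.mem_edgeSet]
        exact f.map_adj_iff.2 he
    have hnot : ∀ t, s(x, t) ∉ Λ.edgeFinset.image (Sym2.map f) := by
      intro t ht
      obtain ⟨e, -, he⟩ := Finset.mem_image.1 ht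
      have : x ∈ Sym2.map f e := by rw [he]; simp
      obtain ⟨v, -, hv⟩ := Sym2.mem_map.1 this
      exact hxf ⟨v, hv⟩
    have h1 := Finset.card_le_card hsub
    rw [Finset.card_insert_of_notMem, Finset.card_insert_of_notMem (hnot q),
      Finset.card_image_of_injective _ (Sym2.map.injective f.injective)] at h1
    · omega
    · rw [Finset.mem_insert, not_or]
      exact ⟨fun e => hpq (Sym2.congr_right.1 e), hnot p⟩
  omega

open Classical in
theorem case_claw {V : Type} [Fintype V] (Λ : SimpleGraph V) (h : Λ.IsAcyclic)
    (o : V) (ho : 3 ≤ (Λ.neighborFinset o).card) :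
    ∃ z x, Λ.Adj o z ∧ z ≠ x ∧
      ¬ Nonempty (Λ ↪g splitG Λ o z (fun v => Λ.Adj o v ∧ v ≠ x)) := by
  obtain ⟨x, y, z, hx, hy, hz, hxy, hxz, hyz⟩ := Finset.two_lt_card_iff.1 ho
  rw [SimpleGraph.mem_neighborFinset] at hx hy hz
  refine ⟨z, x, hz, hxz.symm, ?_⟩
  rintro ⟨f⟩
  have htri : ∀ u v w, Λ.Adj u v → Λ.Adj u w → ¬ Λ.Adj v w := by
    intro u v w h1 h2 h3
    exact h.cliqueFree le_rfl {u, v, w} (SimpleGraph.is3Clique_triple_iff.2 ⟨h1, h2, h3⟩)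
  set Γ := splitG Λ o z (fun v => Λ.Adj o v ∧ v ≠ x) with hΓ
  set d := (Λ.neighborFinset o).card with hd
  -- centers of induced stars in `Γ`
  have hcenter : ∀ (w : Option V) (A : Finset (Option V)), A.card = d →
      (∀ a ∈ A, Γ.Adj w a) → (∀ a ∈ A, ∀ b ∈ A, ¬ Γ.Adj a b) →
      ∃ v, w = some v ∧ v ≠ o ∧ d ≤ (Λ.neighborFinset v).card := by
    intro w A hA hadj hind
    have hfull : ∀ (r : Option V) (t : V), Λ.Adj o t →
        A ⊆ insert r (((Λ.neighborFinset o).erase t).image some) →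
        A = insert r (((Λ.neighborFinset o).erase t).image some) := by
      intro r t ht hsub
      apply Finset.eq_of_subset_of_card_le hsub
      have h1 := Finset.card_insert_le r (((Λ.neighborFinset o).erase t).image some)
      have h2 : (((Λ.neighborFinset o).erase t).image some).card ≤ _ := Finset.card_image_le
      have h3 := Finset.card_erase_add_one ((Λ.mem_neighborFinset o t).2 ht)
      omega
    rcases w with _ | v
    · exfalso
      have hAe := hfull (some o) x hx (by
        intro a ha
        have := hadj a ha
        rcases a with _ | a
        · exact this.elim
        · rcases this with rfl | this
          · simp
          · simp [this])
      refine hind (some o) ?_ (some y) ?_ ⟨hy, ?_⟩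
      · rw [hAe]; simp
      · rw [hAe]; simp [hy, hxy.symm]
      · intro e; exact hyz (Sym2.congr_right.1 e)
    · by_cases hv : v = o
      · exfalso
        subst hv
        have hAe := hfull none z hz (by
          intro a ha
          have := hadj a ha
          rcases a with _ | a
          · simp
          · have h2 : a ≠ z := fun e => this.2 (by rw [e])
            simp [this.1, h2])
        refine hind none ?_ (some y) ?_ (Or.inr ⟨hy, hxy.symm⟩)
        · rw [hAe]; simp
        · rw [hAe]; simp [hy, hyz]
      · refine ⟨v, rfl, hv, ?_⟩
        rw [← hA]
        apply Finset.card_le_card_of_injOn (fun a => a.getD o)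
        · intro a ha
          have := hadj a ha
          rcases a with _ | a
          · rcases this with h1 | h1
            · exact (hv h1).elim
            · simpa using h1.1.symm
          · simpa using this.1
        · intro a ha b hb hab
          rcases a with _ | a <;> rcases b with _ | b
          · rfl
          · exfalso
            have hab : o = b := hab
            exact hind _ ha _ hb (Or.inl hab.symm)
          · exfalso
            have hab : a = o := hab
            exact hind _ ha _ hb (Or.inl hab)
          · have hab : a = b := hab
            rw [hab]
  let C : Finset V := Finset.univ.filter (fun v => d ≤ (Λ.neighborFinset v).card)
  have hC : ∀ v, v ∈ C ↔ d ≤ (Λ.neighborFinset v).card := fun v =>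
    ⟨fun h => (Finset.mem_filter.1 h).2, fun h => Finset.mem_filter.2 ⟨Finset.mem_univ _, h⟩⟩
  have hmap : ∀ u ∈ C, ∃ v, f u = some v ∧ v ∈ C.erase o := by
    intro u hu
    obtain ⟨A, hAs, hA⟩ := Finset.exists_subset_card_eq ((hC u).1 hu)
    have hAadj : ∀ a ∈ A, Λ.Adj u a := fun a ha => by simpa using hAs ha
    obtain ⟨v, h1, h2, h3⟩ := hcenter (f u) (A.image f)
      (by rw [Finset.card_image_of_injective _ f.injective, hA])
      (by
        intro a ha
        obtain ⟨a, ha', rfl⟩ := Finset.mem_image.1 ha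
        exact f.map_adj_iff.2 (hAadj a ha'))
      (by
        intro a ha b hb hab
        obtain ⟨a, ha', rfl⟩ := Finset.mem_image.1 ha
        obtain ⟨b, hb', rfl⟩ := Finset.mem_image.1 hb
        exact htri u a b (hAadj a ha') (hAadj b hb') (f.map_adj_iff.1 hab))
    exact ⟨v, h1, Finset.mem_erase.2 ⟨h2, (hC v).2 h3⟩⟩
  have hle : C.card ≤ (C.erase o).card := by
    apply Finset.card_le_card_of_injOn (fun u => (f u).getD o)
    · intro u hu
      obtain ⟨v, h1, h2⟩ := hmap u hu
      simp only [h1, Option.getD_some]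
      exact h2
    · intro u hu u' hu' e
      obtain ⟨v, h1, h2⟩ := hmap u hu
      obtain ⟨v', h1', h2'⟩ := hmap u' hu'
      simp only [h1, h1', Option.getD_some] at e
      apply f.injective
      rw [h1, h1', e]
  have := Finset.card_erase_add_one ((hC o).2 le_rfl)
  omega

/-- If `Λ` is not a linear forest, then there exists a finite graph `Γ` with
`G(Λ) ↪ G(Γ)` but `Λ` not an induced subgraph of `Γ`. -/
theorem statement2 {V : Type} [Fintype V] (Λ : SimpleGraph V)
    (hΛ : ¬ IsLinearForest Λ) :
    ∃ (W : Type) (_ : Fintype W) (Γ : SimpleGraph W),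
      (∃ φ : GG Λ →* GG Γ, Function.Injective φ) ∧ ¬ Nonempty (Λ ↪g Γ) := by
  classical
  by_cases h : Λ.IsAcyclic
  · have h2 : ∃ o, 3 ≤ (Λ.neighborFinset o).card := by
      by_contra! hcon
      apply hΛ
      refine ⟨h, fun v => ?_⟩
      have h3 := hcon v
      rw [← SimpleGraph.coe_neighborFinset, Set.ncard_coe_finset]
      omega
    obtain ⟨o, ho⟩ := h2
    obtain ⟨z, x, hz, hzx, hno⟩ := case_claw Λ h o ho
    exact ⟨Option V, inferInstance, _,
      split_embeds Λ o z (fun v => Λ.Adj o v ∧ v ≠ x) ⟨hz, hzx⟩ (fun v hv => hv.1), hno⟩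
  · obtain ⟨o, z, hz, hno⟩ := case_cycle Λ h
    exact ⟨Option V, inferInstance, _,
      split_embeds Λ o z (fun v => v = z) rfl (fun v hv => hv ▸ hz), hno⟩
end

section
/- For all integers m, n ≥ 3, there is an injective group homomorphism from G(C_m) into G(C_n) if and only if m ≤ n. -/
open SimpleGraph

namespace RaagCycle

open Classical in
/-- Every element of a free group lies in the subgroup generated by finitely many letters. -/
theorem free_supp {X : Type} (w : FreeGroup X) :
    ∃ S : Finset X, w ∈ Subgroup.closure (FreeGroup.of '' (S : Set X)) := by
  induction w using FreeGroup.induction_on with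
  | C1 => exact ⟨∅, Subgroup.one_mem _⟩
  | of x => exact ⟨{x}, Subgroup.subset_closure ⟨x, by simp, rfl⟩⟩
  | inv_of x _ => exact ⟨{x}, Subgroup.inv_mem _ (Subgroup.subset_closure ⟨x, by simp, rfl⟩)⟩
  | mul a b ha hb =>
    obtain ⟨S, hS⟩ := ha
    obtain ⟨T, hT⟩ := hb
    refine ⟨S ∪ T, Subgroup.mul_mem _ ?_ ?_⟩
    · exact Subgroup.closure_mono (Set.image_mono (by simp)) hS
    · exact Subgroup.closure_mono (Set.image_mono (by simp)) hT

open Classical in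
/-- If a permutation of the letters preserves the conjugacy class of a nontrivial element of the
free group, then some letter has a finite orbit. -/
theorem free_perm {X : Type} (σ : Equiv.Perm X) (w f : FreeGroup X) (hw : w ≠ 1)
    (h : f * FreeGroup.map σ w * f⁻¹ = w) : ∃ N : ℕ, 0 < N ∧ ∃ x, (σ ^ N) x = x := by
  by_contra hcon
  push Not at hcon
  -- finite support
  have hsupp := free_supp w
  obtain ⟨S, hS⟩ := hsupp
  have hinj : ∀ x, ∀ i j : ℕ, i < j → (σ ^ i) x ≠ (σ ^ j) x := by
    intro x i j hij heq
    obtain ⟨d, rfl⟩ := Nat.exists_eq_add_of_lt hij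
    apply hcon (d + 1) (by omega) x
    have : (σ ^ (i + d + 1)) x = (σ ^ i) ((σ ^ (d + 1)) x) := by
      rw [add_assoc, pow_add]; rfl
    rw [this] at heq
    exact ((σ ^ i).injective heq).symm
  have hdis : ∃ N : ℕ, ∀ x ∈ S, (σ ^ N) x ∉ S := by
    by_contra hno
    push Not at hno
    choose g hg hg' using hno
    obtain ⟨i, j, hij, heq⟩ := Finite.exists_ne_map_eq_of_infinite
      (fun N : ℕ => ((⟨g N, hg N⟩, ⟨_, hg' N⟩) : S × S))
    simp only [Prod.mk.injEq, Subtype.mk.injEq] at heq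
    obtain ⟨h1, h2⟩ := heq
    rw [h1] at h2
    rcases lt_or_gt_of_ne hij with h | h
    · exact hinj _ _ _ h h2
    · exact hinj _ _ _ h h2.symm
  obtain ⟨N, hN⟩ := hdis
  have hconj : ∀ N : ℕ, IsConj (FreeGroup.map (σ ^ N : Equiv.Perm X) w) w := by
    intro N
    induction N with
    | zero =>
      rw [pow_zero, show ((1 : Equiv.Perm X) : X → X) = id from rfl, FreeGroup.map.id]
    | succ N ih =>
      have h1 : IsConj (FreeGroup.map σ w) w := isConj_iff.2 ⟨f, h⟩
      have h2 := MonoidHom.map_isConj (FreeGroup.map σ) ih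
      refine IsConj.trans ?_ h1
      rw [FreeGroup.map.comp] at h2
      rw [pow_succ']
      exact h2
  let k : FreeGroup X →* FreeGroup X :=
    FreeGroup.lift (fun x => if x ∈ S then FreeGroup.of x else 1)
  have hk1 : k w = w := by
    have : Set.EqOn k (MonoidHom.id _) (Subgroup.closure (FreeGroup.of '' (S : Set X))) := by
      apply MonoidHom.eqOn_closure
      rintro _ ⟨x, hx, rfl⟩
      have : x ∈ S := hx
      simp [k, this]
    exact this hS
  have hk2 : k (FreeGroup.map (σ ^ N : Equiv.Perm X) w) = 1 := by
    have : Set.EqOn (k.comp (FreeGroup.map (σ ^ N : Equiv.Perm X)))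
        (1 : FreeGroup X →* FreeGroup X)
        (Subgroup.closure (FreeGroup.of '' (S : Set X))) := by
      apply MonoidHom.eqOn_closure
      rintro _ ⟨x, hx, rfl⟩
      have := hN x hx
      simp only [MonoidHom.comp_apply, FreeGroup.map.of, k, FreeGroup.lift_apply_of, if_neg this]
      rfl
    exact this hS
  have := MonoidHom.map_isConj k (hconj N)
  rw [hk1, hk2] at this
  exact hw (isConj_one_right.1 this)

open Classical in
/-- Commuting letters of a free group are equal. -/
theorem free_of_comm {X : Type*} {i j : X}
    (h : FreeGroup.of i * FreeGroup.of j = FreeGroup.of j * FreeGroup.of i) : i = j := by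
  by_contra hij
  have h2 := congrArg (FreeGroup.lift
    (fun x => if x = i then Equiv.swap (0 : Fin 3) 1 else Equiv.swap 1 2)) h
  simp only [map_mul, FreeGroup.lift_apply_of, if_true, if_neg (Ne.symm hij)] at h2
  revert h2
  decide

/-- A commutative range inside a free group is cyclic. -/
theorem free_comm_cyclic {X : Type} (H : Subgroup (FreeGroup X))
    (hH : ∀ a ∈ H, ∀ b ∈ H, a * b = b * a) : ∃ g ∈ H, ∀ a ∈ H, ∃ j : ℤ, a = g ^ j := by
  let b := IsFreeGroup.basis H
  have hsub : ∀ i j : IsFreeGroup.Generators H, i = j := by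
    intro i j
    have h1 : b i * b j = b j * b i := Subtype.ext (hH _ (b i).2 _ (b j).2)
    have h2 := congrArg b.repr h1
    simp only [map_mul, FreeGroupBasis.repr_apply_coe] at h2
    exact free_of_comm h2
  by_cases hne : Nonempty (IsFreeGroup.Generators H)
  · obtain ⟨i⟩ := hne
    refine ⟨b i, (b i).2, fun a ha => ?_⟩
    have hmem : ∀ x : FreeGroup (IsFreeGroup.Generators H),
        x ∈ Subgroup.zpowers (FreeGroup.of i) := by
      intro x
      induction x using FreeGroup.induction_on with
      | C1 => exact Subgroup.one_mem _
      | of x => rw [hsub x i]; exact Subgroup.mem_zpowers _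
      | inv_of x h => exact Subgroup.inv_mem _ h
      | mul a b ha hb => exact Subgroup.mul_mem _ ha hb
    obtain ⟨j, hj⟩ := hmem (b.repr ⟨a, ha⟩)
    refine ⟨j, ?_⟩
    have h5 : (b i) ^ j = ⟨a, ha⟩ := by
      apply b.repr.injective
      rw [map_zpow, FreeGroupBasis.repr_apply_coe]
      exact hj
    have := congrArg Subtype.val h5
    simpa using this.symm
  · refine ⟨1, H.one_mem, fun a ha => ⟨0, ?_⟩⟩
    have : ∀ x : FreeGroup (IsFreeGroup.Generators H), x = 1 := by
      intro x
      induction x using FreeGroup.induction_on with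
      | C1 => rfl
      | of x => exact (hne ⟨x⟩).elim
      | inv_of x h => exact (hne ⟨x⟩).elim
      | mul a b ha hb => rw [ha, hb, one_mul]
    have h5 : (⟨a, ha⟩ : H) = 1 := by
      apply b.repr.injective
      rw [this (b.repr ⟨a, ha⟩), map_one]
    simpa using congrArg Subtype.val h5

section

variable {V : Type} {Γ : SimpleGraph V}

/-- The generator of the RAAG attached to a vertex. -/
def gen (Γ : SimpleGraph V) (v : V) : RAAG Γ := PresentedGroup.of v

theorem gen_comm {u v : V} (h : Γ.Adj u v) : Commute (gen Γ u) (gen Γ v) := by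
  have : (PresentedGroup.mk (raagRels Γ)) (FreeGroup.of u * FreeGroup.of v *
      (FreeGroup.of u)⁻¹ * (FreeGroup.of v)⁻¹) = 1 :=
    PresentedGroup.one_of_mem ⟨u, v, h, rfl⟩
  simp only [map_mul, map_inv] at this
  rw [mul_inv_eq_one, mul_inv_eq_iff_eq_mul] at this
  exact this

/-- Universal property of the RAAG. -/
def raagLift {K : Type*} [Group K] (f : V → K) (h : ∀ u v, Γ.Adj u v → Commute (f u) (f v)) :
    RAAG Γ →* K :=
  PresentedGroup.toGroup (rels := raagRels Γ) (f := f) (by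
    rintro _ ⟨u, v, huv, rfl⟩
    simp only [map_mul, map_inv, FreeGroup.lift_apply_of]
    rw [mul_inv_eq_one, mul_inv_eq_iff_eq_mul]
    exact h u v huv)

@[simp] theorem raagLift_gen {K : Type*} [Group K] (f : V → K)
    (h : ∀ u v, Γ.Adj u v → Commute (f u) (f v)) (v : V) : raagLift f h (gen Γ v) = f v :=
  PresentedGroup.toGroup.of _

theorem raag_ext {K : Type*} [Group K] {f g : RAAG Γ →* K} (h : ∀ v, f (gen Γ v) = g (gen Γ v)) :
    f = g := PresentedGroup.ext h

open Classical in
/-- Retraction killing all vertices outside `U`. -/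
noncomputable def kill (Γ : SimpleGraph V) (U : Set V) : RAAG Γ →* RAAG Γ :=
  raagLift (fun v => if v ∈ U then gen Γ v else 1) (by
    intro u v h
    split_ifs <;> simp [gen_comm h])

theorem kill_gen_mem {U : Set V} {v : V} (h : v ∈ U) : kill Γ U (gen Γ v) = gen Γ v := by
  simp [kill, h]

theorem kill_gen_not {U : Set V} {v : V} (h : v ∉ U) : kill Γ U (gen Γ v) = 1 := by
  simp [kill, h]

theorem kill_kill (U W : Set V) (g : RAAG Γ) : kill Γ U (kill Γ W g) = kill Γ (U ∩ W) g := by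
  have : (kill Γ U).comp (kill Γ W) = kill Γ (U ∩ W) := by
    apply raag_ext
    intro v
    by_cases h1 : v ∈ U <;> by_cases h2 : v ∈ W <;>
      simp [kill, h1, h2]
  exact DFunLike.congr_fun this g

theorem kill_univ (g : RAAG Γ) : kill Γ Set.univ g = g := by
  have : kill Γ Set.univ = MonoidHom.id _ := by
    apply raag_ext
    intro v
    simp [kill]
  exact DFunLike.congr_fun this g

theorem kill_empty (g : RAAG Γ) : kill Γ ∅ g = 1 := by
  have : kill Γ ∅ = 1 := by
    apply raag_ext
    intro v
    simp [kill]
  exact DFunLike.congr_fun this g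

/-- The parabolic subgroup on the part of the link of `v` within `U`. -/
def lkSub (Γ : SimpleGraph V) (U : Set V) (v : V) : Subgroup (RAAG Γ) :=
  Subgroup.closure {g | ∃ u ∈ U, Γ.Adj u v ∧ g = gen Γ u}

/-- The permutation action on the free group on cosets. -/
def cact (P : Subgroup (RAAG Γ)) : RAAG Γ →* MulAut (FreeGroup (RAAG Γ ⧸ P)) where
  toFun g := FreeGroup.freeGroupCongr (MulAction.toPerm g)
  map_one' := by
    ext x
    induction x using FreeGroup.induction_on <;> simp_all
  map_mul' a b := by
    ext x
    induction x using FreeGroup.induction_on <;> simp_all [mul_smul]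

theorem cact_apply (P : Subgroup (RAAG Γ)) (g : RAAG Γ) (w : FreeGroup (RAAG Γ ⧸ P)) :
    cact P g w = FreeGroup.map (MulAction.toPerm g : Equiv.Perm (RAAG Γ ⧸ P)) w := rfl

open Classical in
/-- The map to the semidirect product. -/
noncomputable def theta (Γ : SimpleGraph V) (U : Set V) (v : V) :
    RAAG Γ →* FreeGroup (RAAG Γ ⧸ lkSub Γ U v) ⋊[cact (lkSub Γ U v)] RAAG Γ :=
  raagLift (fun u => if u ∈ U then SemidirectProduct.inr (gen Γ u) else
    if u = v then SemidirectProduct.inl (FreeGroup.of ((1 : RAAG Γ) : RAAG Γ ⧸ lkSub Γ U v))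
    else 1) (by
    have key : ∀ u, u ∈ U → Γ.Adj u v → Commute
        (SemidirectProduct.inr (gen Γ u) :
          FreeGroup (RAAG Γ ⧸ lkSub Γ U v) ⋊[cact (lkSub Γ U v)] RAAG Γ)
        (SemidirectProduct.inl (FreeGroup.of ((1 : RAAG Γ) : RAAG Γ ⧸ lkSub Γ U v))) := by
      intro u hu huv
      have h1 : cact (lkSub Γ U v) (gen Γ u)
          (FreeGroup.of ((1 : RAAG Γ) : RAAG Γ ⧸ lkSub Γ U v)) =
          FreeGroup.of ((1 : RAAG Γ) : RAAG Γ ⧸ lkSub Γ U v) := by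
        rw [cact_apply, FreeGroup.map.of]
        congr 1
        change ((gen Γ u * 1 : RAAG Γ) : RAAG Γ ⧸ lkSub Γ U v) = _
        rw [mul_one, eq_comm, QuotientGroup.eq]
        simp only [inv_one, one_mul]
        exact Subgroup.subset_closure ⟨u, hu, huv, rfl⟩
      ext
      · simp [h1]
      · simp
    intro a b hab
    split_ifs with h1 h2 h3 h4 h5 h6 h7 <;> try simp
    · exact (gen_comm hab).map SemidirectProduct.inr
    · subst h3; exact key a h1 hab
    · subst h4; exact (key b h5 hab.symm).symm)

theorem theta_right (U : Set V) (v : V) (g : RAAG Γ) : (theta Γ U v g).right = kill Γ U g := by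
  have : (SemidirectProduct.rightHom).comp (theta Γ U v) = kill Γ U := by
    apply raag_ext
    intro u
    simp only [theta, kill, MonoidHom.comp_apply, raagLift_gen]
    split_ifs <;> simp
  exact DFunLike.congr_fun this g

/-- Left inverse on the free part. -/
noncomputable def etaF (Γ : SimpleGraph V) (U : Set V) (v : V) :
    FreeGroup (RAAG Γ ⧸ lkSub Γ U v) →* RAAG Γ :=
  FreeGroup.lift (fun x => Quotient.liftOn' x
    (fun g => kill Γ U g * gen Γ v * (kill Γ U g)⁻¹) (by
      intro a b hab
      rw [QuotientGroup.leftRel_apply] at hab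
      have : Commute (kill Γ U (a⁻¹ * b)) (gen Γ v) := by
        have hle : lkSub Γ U v ≤ (Subgroup.centralizer {gen Γ v}).comap (kill Γ U) := by
          rw [lkSub, Subgroup.closure_le]
          rintro _ ⟨u, hu, huv, rfl⟩
          simp only [SetLike.mem_coe, Subgroup.mem_comap, kill_gen_mem hu,
            Subgroup.mem_centralizer_singleton_iff]
          exact gen_comm huv
        have := hle hab
        simp only [Subgroup.mem_comap, Subgroup.mem_centralizer_singleton_iff] at this
        exact this
      have h2 : kill Γ U b = kill Γ U a * kill Γ U (a⁻¹ * b) := by simp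
      rw [h2, mul_inv_rev]
      have h3 := this.eq
      calc _ = kill Γ U a * (gen Γ v * kill Γ U (a⁻¹ * b)) * (kill Γ U (a⁻¹ * b))⁻¹ *
            (kill Γ U a)⁻¹ := by group
        _ = _ := by rw [← h3]; group))

theorem etaF_of (U : Set V) (v : V) (g : RAAG Γ) :
    etaF Γ U v (FreeGroup.of (g : RAAG Γ ⧸ lkSub Γ U v)) =
      kill Γ U g * gen Γ v * (kill Γ U g)⁻¹ := by
  simp only [etaF, FreeGroup.lift_apply_of]
  rfl

/-- Left inverse. -/
noncomputable def eta (Γ : SimpleGraph V) (U : Set V) (v : V) :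
    FreeGroup (RAAG Γ ⧸ lkSub Γ U v) ⋊[cact (lkSub Γ U v)] RAAG Γ →* RAAG Γ :=
  SemidirectProduct.lift (etaF Γ U v) (kill Γ U) (by
    intro g
    apply FreeGroup.ext_hom
    intro x
    induction x using QuotientGroup.induction_on with
    | H a =>
    simp only [MonoidHom.comp_apply, MulEquiv.coe_toMonoidHom, cact_apply, FreeGroup.map.of]
    rw [etaF_of]
    change etaF Γ U v (FreeGroup.of ((g * a : RAAG Γ) : RAAG Γ ⧸ lkSub Γ U v)) = _
    rw [etaF_of]
    simp [mul_assoc])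

theorem eta_theta {U : Set V} {v : V} (hv : v ∉ U) (g : RAAG Γ) :
    eta Γ U v (theta Γ U v g) = kill Γ (insert v U) g := by
  have : (eta Γ U v).comp (theta Γ U v) = kill Γ (insert v U) := by
    apply raag_ext
    intro u
    simp only [theta, MonoidHom.comp_apply, raagLift_gen]
    split_ifs with h1 h2
    · rw [kill_gen_mem (Set.mem_insert_of_mem v h1), eta, SemidirectProduct.lift_inr, kill_gen_mem h1]
    · subst h2
      rw [kill_gen_mem (Set.mem_insert u U), eta, SemidirectProduct.lift_inl, etaF_of]
      simp
    · rw [kill_gen_not (by simp [h1, h2]), map_one]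
  exact DFunLike.congr_fun this g

/-- The free part of an element killed by `kill U`, nontrivial iff not killed by `U ∪ {v}`. -/
theorem left_ne {U : Set V} {v : V} (hv : v ∉ U) {w : RAAG Γ} (h0 : kill Γ U w = 1)
    : (theta Γ U v w).left = 1 ↔ kill Γ (insert v U) w = 1 := by
  constructor
  · intro h
    rw [← eta_theta hv]
    have : theta Γ U v w = 1 := by
      ext
      · simpa using h
      · rw [theta_right, h0]; rfl
    rw [this, map_one]
  · intro h
    have : (theta Γ U v).comp (kill Γ (insert v U)) = theta Γ U v := by
      apply raag_ext
      intro u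
      by_cases hu : u ∈ insert v U
      · simp [kill_gen_mem hu]
      · have h1 : u ≠ v := fun h => hu (Or.inl h)
        have h2 : u ∉ U := fun h => hu (Or.inr h)
        simp [kill_gen_not hu, theta, h1, h2]
    have h2 := DFunLike.congr_fun this w
    rw [MonoidHom.comp_apply, h, map_one] at h2
    rw [← h2]; rfl

/-- Key lemma. -/
theorem key {U : Set V} {v : V} (hv : v ∉ U) {w g : RAAG Γ} (hc : Commute g w)
    (h0 : kill Γ U w = 1) (h1 : kill Γ (insert v U) w ≠ 1) :
    ∃ N : ℕ, 0 < N ∧ ∃ h : RAAG Γ, h⁻¹ * (kill Γ U g) ^ N * h ∈ lkSub Γ U v := by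
  have hne : (theta Γ U v w).left ≠ 1 := fun h => h1 ((left_ne hv h0).1 h)
  have hw : theta Γ U v w = SemidirectProduct.inl (theta Γ U v w).left := by
    ext
    · simp
    · rw [theta_right, h0]; rfl
  have hcc := (hc.map (theta Γ U v)).eq
  have h2 := congrArg SemidirectProduct.left hcc
  rw [SemidirectProduct.mul_left, SemidirectProduct.mul_left, theta_right, theta_right, h0,
    map_one, MulAut.one_apply, cact_apply] at h2
  have h3 : (theta Γ U v g).left * FreeGroup.map (MulAction.toPerm (kill Γ U g) :
      Equiv.Perm (RAAG Γ ⧸ lkSub Γ U v)) (theta Γ U v w).left * ((theta Γ U v g).left)⁻¹ =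
      (theta Γ U v w).left := by
    rw [mul_inv_eq_iff_eq_mul]
    exact h2
  obtain ⟨N, hN, x, hx⟩ := free_perm _ _ _ hne h3
  refine ⟨N, hN, ?_⟩
  induction x using QuotientGroup.induction_on with
  | H a =>
  refine ⟨a, ?_⟩
  have h4 : ((MulAction.toPerm (kill Γ U g) : Equiv.Perm (RAAG Γ ⧸ lkSub Γ U v)) ^ N) =
      MulAction.toPerm ((kill Γ U g) ^ N) :=
    (map_pow (MulAction.toPermHom (RAAG Γ) (RAAG Γ ⧸ lkSub Γ U v)) _ N).symm
  rw [h4] at hx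
  have hx : (((kill Γ U g) ^ N * a : RAAG Γ) : RAAG Γ ⧸ lkSub Γ U v) = a := hx
  rw [eq_comm, QuotientGroup.eq] at hx
  simpa [mul_assoc] using hx

/-- Torsion-freeness relative to the filtration. -/
theorem tf {U : Set V} {v : V} (hv : v ∉ U) {w : RAAG Γ} (h0 : kill Γ U w = 1) {N : ℕ}
    (hN : 0 < N) (h : (kill Γ (insert v U) w) ^ N = 1) : kill Γ (insert v U) w = 1 := by
  have hw : theta Γ U v w = SemidirectProduct.inl (theta Γ U v w).left := by
    ext
    · simp
    · rw [theta_right, h0]; rfl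
  rw [← map_pow] at h
  have h1 := (left_ne hv (w := w ^ N) (by rw [map_pow, h0, one_pow])).2 h
  rw [map_pow, hw, ← map_pow, SemidirectProduct.left_inl] at h1
  exact (left_ne hv h0).1 ((pow_eq_one_iff_left hN.ne').1 h1)

/-- Two jump vertices are adjacent. -/
theorem adj_of_jump {U U' : Set V} {v v' : V} (hv : v ∉ U) (hv' : v' ∉ U') (hUU : U' ⊆ U)
    (hvU : v' ∈ U) {w g : RAAG Γ} (hc : Commute g w)
    (h0 : kill Γ U w = 1) (h1 : kill Γ (insert v U) w ≠ 1)
    (h0' : kill Γ U' g = 1) (h1' : kill Γ (insert v' U') g ≠ 1) : Γ.Adj v' v := by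
  by_contra hadj
  obtain ⟨N, hN, h, hh⟩ := key hv hc h0 h1
  apply h1'
  apply tf hv' h0' hN
  have hins : insert v' U' ⊆ U := Set.insert_subset hvU hUU
  have hP : ∀ p ∈ lkSub Γ U v, kill Γ (insert v' U') p = kill Γ U' p := by
    intro p hp
    refine MonoidHom.eqOn_closure (f := kill Γ (insert v' U')) (g := kill Γ U') ?_ hp
    rintro _ ⟨u, hu, huv, rfl⟩
    have hne : u ≠ v' := by rintro rfl; exact hadj huv
    by_cases hu' : u ∈ U'
    · rw [kill_gen_mem hu', kill_gen_mem (Set.mem_insert_of_mem _ hu')]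
    · rw [kill_gen_not hu', kill_gen_not (by simp [hne, hu'])]
  have h2 := hP _ hh
  simp only [map_mul, map_pow, map_inv, kill_kill] at h2
  rw [Set.inter_eq_left.2 hins, Set.inter_eq_left.2 hUU, h0', one_pow, mul_one,
    inv_mul_cancel] at h2
  rw [mul_assoc, inv_mul_eq_one] at h2
  exact right_eq_mul.1 h2

section filtration

variable {M : Type} [AddCommGroup M] (φ : Multiplicative M →* RAAG Γ)

/-- The part of the abelian group which dies in the parabolic on `U`. -/
noncomputable def LL (U : Set V) : Submodule ℤ M :=
  AddSubgroup.toIntSubmodule (Subgroup.toAddSubgroup' ((kill Γ U).comp φ).ker)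

theorem mem_LL {U : Set V} {b : M} : b ∈ LL φ U ↔ kill Γ U (φ (Multiplicative.ofAdd b)) = 1 :=
  Iff.rfl

theorem LL_anti {U U' : Set V} (h : U ⊆ U') : LL φ U' ≤ LL φ U := by
  intro b hb
  rw [mem_LL] at *
  rw [← Set.inter_eq_left.2 h, ← kill_kill, hb, map_one]

theorem LL_empty : LL φ ∅ = ⊤ := by
  ext b; simp [mem_LL, kill_empty]

theorem LL_univ (hφ : Function.Injective φ) : LL φ Set.univ = ⊥ := by
  ext b
  rw [mem_LL, kill_univ, Submodule.mem_bot, map_eq_one_iff φ hφ]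
  rfl

theorem LL_finrank [Module.Finite ℤ M] {U : Set V} {v : V} (hv : v ∉ U) :
    Module.finrank ℤ (LL φ U) ≤ Module.finrank ℤ (LL φ (insert v U)) + 1 := by
  -- the free part
  let P := lkSub Γ U v
  let f : Multiplicative (LL φ U) →* FreeGroup (RAAG Γ ⧸ P) :=
    { toFun := fun b => (theta Γ U v (φ (Multiplicative.ofAdd (b.toAdd : M)))).left
      map_one' := by simp
      map_mul' := by
        intro a b
        have ha : kill Γ U (φ (Multiplicative.ofAdd (a.toAdd : M))) = 1 := a.toAdd.2
        simp only [toAdd_mul, Submodule.coe_add, ofAdd_add, map_mul, SemidirectProduct.mul_left,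
          theta_right, ha, map_one, MulAut.one_apply] }
  obtain ⟨g, ⟨b, rfl⟩, hg⟩ := free_comm_cyclic f.range (by
    rintro _ ⟨a, rfl⟩ _ ⟨b, rfl⟩
    rw [← map_mul, mul_comm, map_mul])
  have hspan : ∀ a : LL φ U, ∃ j : ℤ, (a : M) - j • (b.toAdd : M) ∈ LL φ (insert v U) := by
    intro a
    obtain ⟨j, hj⟩ := hg (f (Multiplicative.ofAdd a)) ⟨_, rfl⟩
    refine ⟨j, ?_⟩
    have h1 : f (Multiplicative.ofAdd (a - j • b.toAdd)) = 1 := by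
      have : Multiplicative.ofAdd (a - j • b.toAdd) = Multiplicative.ofAdd a * (b ^ j)⁻¹ := by
        rw [sub_eq_add_neg]; rfl
      rw [this, map_mul, map_inv, map_zpow, hj, mul_inv_cancel]
    exact (left_ne hv (a - j • b.toAdd).2).1 h1
  let N : Submodule ℤ (LL φ U) := (LL φ (insert v U)).comap (LL φ U).subtype
  have hN : Module.finrank ℤ N = Module.finrank ℤ (LL φ (insert v U)) :=
    (Submodule.comapSubtypeEquivOfLe (LL_anti φ (Set.subset_insert v U))).finrank_eq
  have hq : Module.finrank ℤ (LL φ U ⧸ N) ≤ 1 := by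
    apply finrank_le_one (N.mkQ b.toAdd)
    intro w
    obtain ⟨a, rfl⟩ := N.mkQ_surjective w
    obtain ⟨j, hj⟩ := hspan a
    refine ⟨j, ?_⟩
    rw [← map_smul, ← sub_eq_zero, ← map_sub, Submodule.mkQ_apply, Submodule.Quotient.mk_eq_zero,
      ← neg_mem_iff, neg_sub]
    exact hj
  have := N.finrank_quotient_add_finrank
  omega

/-- Vertices preceding stage `t`. -/
def below (ρ : V → ℕ) (t : ℕ) : Set V := {u | ρ u < t}

/-- Jump vertices for the ordering `ρ`. -/
def jumps (ρ : V → ℕ) : Set V := {v | LL φ (below ρ (ρ v)) ≠ LL φ (below ρ (ρ v + 1))}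

theorem below_succ {ρ : V → ℕ} (hρ : Function.Injective ρ) (v : V) :
    below ρ (ρ v + 1) = insert v (below ρ (ρ v)) := by
  ext u
  simp only [below, Set.mem_ofPred_eq, Set.mem_insert_iff, Nat.lt_succ_iff, le_iff_lt_or_eq,
    hρ.eq_iff]
  tauto

theorem below_succ' {ρ : V → ℕ} {t : ℕ} (ht : ∀ v, ρ v ≠ t) : below ρ (t + 1) = below ρ t := by
  ext u
  simp only [below, Set.mem_ofPred_eq]
  have := ht u
  omega

theorem jumps_adj {ρ : V → ℕ} (hρ : Function.Injective ρ) {v v' : V} (hv : v ∈ jumps φ ρ)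
    (hv' : v' ∈ jumps φ ρ) (hne : v' ≠ v) : Γ.Adj v' v := by
  wlog hlt : ρ v' < ρ v generalizing v v'
  · have hρne : ρ v' ≠ ρ v := fun h => hne (hρ h)
    exact (this hv' hv hne.symm (by omega)).symm
  have hex : ∀ v ∈ jumps φ ρ, ∃ b, kill Γ (below ρ (ρ v)) (φ b) = 1 ∧
      kill Γ (insert v (below ρ (ρ v))) (φ b) ≠ 1 := by
    intro v hv
    by_contra hcon
    push Not at hcon
    apply hv
    apply le_antisymm
    · intro b hb
      rw [below_succ hρ]
      exact hcon _ hb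
    · rw [below_succ hρ]
      exact LL_anti φ (Set.subset_insert _ _)
  obtain ⟨b, hb, hb'⟩ := hex v hv
  obtain ⟨c, hc, hc'⟩ := hex v' hv'
  refine adj_of_jump (by simp [below]) (by simp [below]) ?_ hlt ?_ hb hb' hc hc'
  · intro u hu
    exact lt_trans (show ρ u < ρ v' from hu) hlt
  · exact (Commute.all c b).map φ

theorem LL_const {ρ : V → ℕ} {s t : ℕ} (hst : s ≤ t)
    (h : ∀ v ∈ jumps φ ρ, s ≤ ρ v → ¬ ρ v < t) : LL φ (below ρ s) = LL φ (below ρ t) := by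
  induction t, hst using Nat.le_induction with
  | base => rfl
  | succ t hst ih =>
    rw [ih (fun v hv h1 h2 => h v hv h1 (by omega))]
    by_cases hex : ∃ v, ρ v = t
    · obtain ⟨v, rfl⟩ := hex
      by_contra hne
      exact h v hne hst (by omega)
    · push Not at hex
      rw [below_succ' hex]

theorem LL_rank [Module.Finite ℤ M] [Finite V] {ρ : V → ℕ} (hρ : Function.Injective ρ) (t : ℕ) :
    Module.finrank ℤ M ≤ Module.finrank ℤ (LL φ (below ρ t)) +
      (jumps φ ρ ∩ below ρ t).ncard := by
  induction t with
  | zero =>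
    have : below ρ 0 = ∅ := by ext; simp [below]
    rw [this, LL_empty]
    simp
  | succ t ih =>
    by_cases hex : ∃ v, ρ v = t
    · obtain ⟨v, rfl⟩ := hex
      by_cases hj : v ∈ jumps φ ρ
      · have h1 := LL_finrank φ (U := below ρ (ρ v)) (v := v) (by simp [below])
        have h2 : jumps φ ρ ∩ below ρ (ρ v + 1) = insert v (jumps φ ρ ∩ below ρ (ρ v)) := by
          rw [below_succ hρ, Set.inter_insert_of_mem hj]
        rw [h2, Set.ncard_insert_of_notMem (by simp [below]) (Set.toFinite _), below_succ hρ]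
        omega
      · have h1 : LL φ (below ρ (ρ v)) = LL φ (below ρ (ρ v + 1)) := by
          by_contra h; exact hj h
        have h2 : jumps φ ρ ∩ below ρ (ρ v + 1) = jumps φ ρ ∩ below ρ (ρ v) := by
          rw [below_succ hρ, Set.inter_insert_of_notMem hj]
        rw [h2, ← h1]
        exact ih
    · push Not at hex
      rw [below_succ' hex]
      exact ih

end filtration
end

theorem cyc_adj {n : ℕ} (hn : 3 ≤ n) (u v : Fin n) : (cycleGraph n).Adj u v ↔
    u.val + 1 = v.val ∨ v.val + 1 = u.val ∨ (u.val = 0 ∧ v.val + 1 = n) ∨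
      (v.val = 0 ∧ u.val + 1 = n) := by
  have hsub : ∀ a b : Fin n, (a - b).val = if b.val ≤ a.val then a.val - b.val
      else n - b.val + a.val := by
    intro a b
    rw [Fin.val_sub]
    have := a.2
    have := b.2
    split_ifs with h
    · rw [show n - b.val + a.val = (a.val - b.val) + n by omega, Nat.add_mod_right,
        Nat.mod_eq_of_lt (by omega)]
    · exact Nat.mod_eq_of_lt (by omega)
  rw [cycleGraph_adj', hsub, hsub]
  have := u.2
  have := v.2
  split_ifs <;> omega

theorem raag_induction {V : Type} {Γ : SimpleGraph V} {p : RAAG Γ → Prop}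
    (one : p 1) (hgen : ∀ v, p (gen Γ v)) (mul : ∀ a b, p a → p b → p (a * b))
    (inv : ∀ a, p a → p a⁻¹) (g : RAAG Γ) : p g := by
  let S : Subgroup (RAAG Γ) :=
    { carrier := {g | p g}, one_mem' := one, mul_mem' := fun {a b} ha hb => mul a b ha hb,
      inv_mem' := fun {a} ha => inv a ha }
  have h : S = ⊤ := by
    rw [eq_top_iff, ← PresentedGroup.closure_range_of, Subgroup.closure_le]
    rintro _ ⟨v, rfl⟩
    exact hgen v
  have : g ∈ S := h ▸ Subgroup.mem_top g
  exact this

/-- Diagonal action of `A × A` on two copies of `A`. -/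
def dperm (A : Type) [Group A] : A × A →* Equiv.Perm (Bool × A) where
  toFun p :=
    { toFun := fun x => (x.1, (bif x.1 then p.2 else p.1) * x.2)
      invFun := fun x => (x.1, (bif x.1 then p.2 else p.1)⁻¹ * x.2)
      left_inv := fun x => by simp
      right_inv := fun x => by simp }
  map_one' := by ext ⟨i, x⟩ <;> cases i <;> simp
  map_mul' p q := by ext ⟨i, x⟩ <;> cases i <;> simp [mul_assoc]

/-- The swap of the two copies. -/
def sperm (A : Type) : Equiv.Perm (Bool × A) where
  toFun x := (!x.1, x.2)
  invFun x := (!x.1, x.2)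
  left_inv x := by simp
  right_inv x := by simp

theorem sperm_comm (A : Type) [Group A] (g : A) : Commute (sperm A) (dperm A (g, g)) := by
  ext ⟨i, x⟩ <;> cases i <;> simp [sperm, dperm]

theorem commute_of_not {n : ℕ} {u v : Fin n} (h : ¬ (cycleGraph n).Adj u v) :
    Commute (gen (cycleGraph n)ᶜ u) (gen (cycleGraph n)ᶜ v) := by
  by_cases huv : u = v
  · subst huv; exact Commute.refl _
  · exact gen_comm ⟨huv, h⟩

theorem embed_succ (n : ℕ) (hn : 3 ≤ n) :
    ∃ φ : GG (cycleGraph n) →* GG (cycleGraph (n + 1)), Function.Injective φ := by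
  let a : GG (cycleGraph (n + 1)) := gen _ ⟨n - 1, by omega⟩
  let b : GG (cycleGraph (n + 1)) := gen _ ⟨n, by omega⟩
  let ψ : GG (cycleGraph n) →* GG (cycleGraph (n + 1)) :=
    raagLift (fun i => if i.val = n - 1 then b⁻¹ * a * b else gen _ i.castSucc) (by
      have key : ∀ v : Fin n, v.val ≠ n - 1 → v.val ≠ n - 2 → v.val ≠ 0 →
          Commute (b⁻¹ * a * b) (gen (cycleGraph (n + 1))ᶜ v.castSucc) := by
        intro v h1 h2 h3
        have hva : Commute a (gen (cycleGraph (n + 1))ᶜ v.castSucc) := by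
          apply commute_of_not
          rw [cyc_adj (by omega)]
          simp only [Fin.val_castSucc]
          omega
        have hvb : Commute b (gen (cycleGraph (n + 1))ᶜ v.castSucc) := by
          apply commute_of_not
          rw [cyc_adj (by omega)]
          simp only [Fin.val_castSucc]
          omega
        exact (hvb.inv_left.mul_left hva).mul_left hvb
      intro u v huv
      rw [compl_adj, cyc_adj hn] at huv
      obtain ⟨hne, hnadj⟩ := huv
      have hne' : u.val ≠ v.val := fun h => hne (Fin.ext h)
      have := u.2
      have := v.2
      split_ifs with h1 h2 h3
      · omega
      · exact key v (by omega) (by omega) (by omega)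
      · exact (key u (by omega) (by omega) (by omega)).symm
      · apply commute_of_not
        rw [cyc_adj (by omega)]
        simp only [Fin.val_castSucc]
        omega)
  let A := GG (cycleGraph n)
  let g' : Fin (n + 1) → A := fun j => if h : j.val < n then gen _ ⟨j.val, h⟩ else 1
  let f : Fin (n + 1) → A × A := fun j =>
    (if j.val = n - 1 then 1 else g' j, if j.val = 0 then 1 else g' j)
  have hcomm : ∀ u v : Fin (n + 1), u ≠ v → ¬ (cycleGraph (n + 1)).Adj u v → u.val < n →
      v.val < n → Commute (f u) (f v) := by
    intro u v hne hadj hu hv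
    rw [cyc_adj (by omega)] at hadj
    have hne' : u.val ≠ v.val := fun h => hne (Fin.ext h)
    apply Prod.ext
    · change (if u.val = n - 1 then 1 else g' u) * (if v.val = n - 1 then 1 else g' v) =
        (if v.val = n - 1 then 1 else g' v) * (if u.val = n - 1 then 1 else g' u)
      split_ifs with h1 h2 h2
      · simp
      · simp
      · simp
      · simp only [g', dif_pos hu, dif_pos hv]
        apply commute_of_not
        rw [cyc_adj hn]
        simp only
        omega
    · change (if u.val = 0 then 1 else g' u) * (if v.val = 0 then 1 else g' v) =
        (if v.val = 0 then 1 else g' v) * (if u.val = 0 then 1 else g' u)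
      split_ifs with h1 h2 h2
      · simp
      · simp
      · simp
      · simp only [g', dif_pos hu, dif_pos hv]
        apply commute_of_not
        rw [cyc_adj hn]
        simp only
        omega
  let ρ : GG (cycleGraph (n + 1)) →* Equiv.Perm (Bool × A) :=
    raagLift (fun j => if j.val = n then sperm A else dperm A (f j)) (by
      have key : ∀ v : Fin (n + 1), v.val ≠ n → v.val ≠ n - 1 → v.val ≠ 0 →
          Commute (sperm A) (dperm A (f v)) := by
        intro v h1 h2 h3
        simp only [f, if_neg h2, if_neg h3]
        exact sperm_comm A _
      intro u v huv
      rw [compl_adj] at huv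
      obtain ⟨hne, hnadj⟩ := huv
      have hadj := hnadj
      rw [cyc_adj (by omega)] at hadj
      have hne' : u.val ≠ v.val := fun h => hne (Fin.ext h)
      have := u.2
      have := v.2
      split_ifs with h1 h2 h3
      · omega
      · exact key v (by omega) (by omega) (by omega)
      · exact (key u (by omega) (by omega) (by omega)).symm
      · exact (hcomm u v hne hnadj (by omega) (by omega)).map _)
  have hρ : ∀ g : A, ∀ x : A, ρ (ψ g) (false, x) = (false, g * x) := by
    intro g
    refine raag_induction (p := fun g : A => ∀ x : A, ρ (ψ g) (false, x) = (false, g * x))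
      ?_ ?_ ?_ ?_ g
    · intro x; simp
    · intro v x
      by_cases hv : v.val = n - 1
      · have h1 : ψ (gen _ v) = b⁻¹ * a * b := by simp [ψ, hv]
        have hb : ρ b = sperm A := by simp [ρ, b]
        have ha : ρ a = dperm A (f ⟨n - 1, by omega⟩) := by
          simp only [ρ, a, raagLift_gen]
          rw [if_neg (by omega)]
        have hs : (sperm A)⁻¹ = sperm A := rfl
        have h0 : n - 1 ≠ 0 := by omega
        have h2 : n - 1 < n := by omega
        have hv' : v = ⟨n - 1, h2⟩ := Fin.ext hv
        rw [h1, map_mul, map_mul, map_inv, hb, ha, hs]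
        simp [sperm, dperm, f, g', h0, h2, hv']
      · have h1 : ψ (gen _ v) = gen _ v.castSucc := by simp [ψ, hv]
        have h2 : ρ (gen _ v.castSucc) = dperm A (f v.castSucc) := by
          simp [ρ, v.2.ne]
        rw [h1, h2]
        simp [dperm, f, g', hv]
    · intro c d hc hd x
      rw [map_mul, map_mul, Equiv.Perm.mul_apply, hd, hc, mul_assoc]
    · intro c hc x
      rw [map_inv, map_inv, Equiv.Perm.inv_eq_iff_eq, hc]
      simp
  refine ⟨ψ, fun g h hgh => ?_⟩
  have h1 := hρ g 1
  rw [hgh, hρ h 1] at h1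
  simpa using h1.symm

theorem embed_le (m n : ℕ) (hm : 3 ≤ m) (hmn : m ≤ n) :
    ∃ φ : GG (cycleGraph m) →* GG (cycleGraph n), Function.Injective φ := by
  induction n, hmn using Nat.le_induction with
  | base => exact ⟨MonoidHom.id _, Function.injective_id⟩
  | succ n hmn ih =>
    obtain ⟨φ, hφ⟩ := ih
    obtain ⟨ψ, hψ⟩ := embed_succ n (by omega)
    exact ⟨ψ.comp φ, hψ.comp hφ⟩

section indep

variable {n : ℕ}

/-- Cyclic shift. -/
def shift (hn : 3 ≤ n) (i : Fin n) : Fin n :=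
  if h : i.val + 1 < n then ⟨i.val + 1, h⟩ else ⟨0, by omega⟩

theorem shift_inj (hn : 3 ≤ n) : Function.Injective (shift hn) := by
  intro i j h
  have := congrArg Fin.val h
  have := i.2
  have := j.2
  apply Fin.ext
  unfold shift at *
  split_ifs at * <;> simp at * <;> omega

theorem shift_adj (hn : 3 ≤ n) (i : Fin n) : (cycleGraph n).Adj i (shift hn i) := by
  rw [cyc_adj hn]
  have := i.2
  unfold shift
  split_ifs <;> simp <;> omega

theorem indep_disj (hn : 3 ≤ n) {T : Set (Fin n)}
    (hT : ∀ u ∈ T, ∀ v ∈ T, ¬ (cycleGraph n).Adj u v) : Disjoint T (shift hn '' T) := by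
  rw [Set.disjoint_left]
  rintro _ h ⟨i, hi, rfl⟩
  exact hT _ hi _ h (shift_adj hn i)

theorem indep_union (hn : 3 ≤ n) {T : Set (Fin n)}
    (hT : ∀ u ∈ T, ∀ v ∈ T, ¬ (cycleGraph n).Adj u v) :
    (T ∪ shift hn '' T).ncard = 2 * T.ncard := by
  rw [Set.ncard_union_eq (indep_disj hn hT) (Set.toFinite _) (Set.toFinite _),
    Set.ncard_image_of_injective _ (shift_inj hn)]
  omega

theorem indep_card (hn : 3 ≤ n) {T : Set (Fin n)}
    (hT : ∀ u ∈ T, ∀ v ∈ T, ¬ (cycleGraph n).Adj u v) : 2 * T.ncard ≤ n := by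
  rw [← indep_union hn hT]
  have := Set.ncard_le_card (T ∪ shift hn '' T)
  simpa using this

theorem indep_max (hn : 3 ≤ n) {T : Set (Fin n)}
    (hT : ∀ u ∈ T, ∀ v ∈ T, ¬ (cycleGraph n).Adj u v) (hc : n ≤ 2 * T.ncard) :
    T = {i | i.val % 2 = 0} ∨ T = {i | i.val % 2 = 1} := by
  have huniv : T ∪ shift hn '' T = Set.univ := by
    apply Set.eq_of_subset_of_ncard_le (Set.subset_univ _) _ (Set.toFinite _)
    rw [indep_union hn hT, Set.ncard_univ]
    simpa using hc
  have hiff : ∀ i, shift hn i ∈ T ↔ i ∉ T := by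
    intro i
    constructor
    · intro h hi
      exact hT _ hi _ h (shift_adj hn i)
    · intro hi
      have : shift hn i ∈ T ∪ shift hn '' T := huniv ▸ Set.mem_univ _
      rcases this with h | ⟨j, hj, hji⟩
      · exact h
      · rw [shift_inj hn hji] at hj
        exact absurd hj hi
  have hstep : ∀ k (hk : k < n), (⟨k, hk⟩ : Fin n) ∈ T ↔
      (k % 2 = 0 ↔ (⟨0, by omega⟩ : Fin n) ∈ T) := by
    intro k
    induction k with
    | zero => intro hk; simp
    | succ k ih =>
      intro hk
      have h1 := ih (by omega)
      have h2 := hiff ⟨k, by omega⟩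
      have h3 : shift hn ⟨k, by omega⟩ = ⟨k + 1, hk⟩ := by simp [shift, hk]
      rw [h3, h1] at h2
      rw [h2]
      have : (k + 1) % 2 = 0 ↔ ¬ (k % 2 = 0) := by omega
      rw [this]
      tauto
  by_cases h0 : (⟨0, by omega⟩ : Fin n) ∈ T
  · left
    ext i
    rw [hstep i.val i.2]
    simp [h0]
  · right
    ext i
    rw [hstep i.val i.2]
    simp [h0]

end indep

section abelian

/-- The homomorphism from a free abelian group given by a commuting family. -/
def phiHom {r : ℕ} {A : Type} [Group A] (x : Fin r → A)
    (hx : Pairwise fun i j => Commute (x i) (x j)) : Multiplicative (Fin r → ℤ) →* A :=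
  (MonoidHom.noncommPiCoprod (N := fun _ : Fin r => Multiplicative ℤ)
    (fun i => zpowersHom A (x i)) (by
      intro i j hij a b
      simp only [zpowersHom_apply]
      exact (hx hij).zpow_zpow _ _)).comp
  { toFun := fun f i => Multiplicative.ofAdd (f.toAdd i)
    map_one' := rfl
    map_mul' := fun _ _ => rfl }

theorem phi_single {r : ℕ} {A : Type} [Group A] (x : Fin r → A)
    (hx : Pairwise fun i j => Commute (x i) (x j)) (i : Fin r) (k : ℤ) :
    phiHom x hx (Multiplicative.ofAdd (Pi.single i k)) = x i ^ k := by
  have : (fun j => Multiplicative.ofAdd ((Pi.single i k : Fin r → ℤ) j)) =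
      Pi.mulSingle i (Multiplicative.ofAdd k) := by
    ext j
    by_cases h : j = i
    · subst h; simp
    · simp [h]
  simp only [phiHom, MonoidHom.comp_apply, MonoidHom.coe_mk, OneHom.coe_mk, toAdd_ofAdd]
  rw [this]
  refine (MonoidHom.noncommPiCoprod_mulSingle (N := fun _ : Fin r => Multiplicative ℤ) _ i
    (Multiplicative.ofAdd k)).trans ?_
  simp [zpowersHom_apply]

theorem phi_eval {r : ℕ} {A : Type} [Group A] (x : Fin r → A)
    (hx : Pairwise fun i j => Commute (x i) (x j)) (χ : A →* Multiplicative ℤ) (j : Fin r)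
    (hχ : ∀ i, χ (x i) = Multiplicative.ofAdd (if i = j then 1 else 0))
    (b : Multiplicative (Fin r → ℤ)) : χ (phiHom x hx b) = Multiplicative.ofAdd (b.toAdd j) := by
  let ev : Multiplicative (Fin r → ℤ) →* Multiplicative ℤ :=
    { toFun := fun b => Multiplicative.ofAdd (b.toAdd j)
      map_one' := rfl
      map_mul' := fun _ _ => rfl }
  have hb : b = ∏ i, Multiplicative.ofAdd (Pi.single i (b.toAdd i)) := by
    rw [← ofAdd_sum, Finset.univ_sum_single]
    rfl
  have key : χ.comp (phiHom x hx) b = ev b := by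
    rw [hb, map_prod, map_prod]
    apply Finset.prod_congr rfl
    intro i _
    rw [MonoidHom.comp_apply, phi_single, map_zpow, hχ]
    by_cases h : i = j
    · subst h
      simp [ev, ← ofAdd_zsmul]
    · simp [ev, h, Pi.single_eq_of_ne (Ne.symm h)]
  exact key

theorem phi_inj {r : ℕ} {A : Type} [Group A] (x : Fin r → A)
    (hx : Pairwise fun i j => Commute (x i) (x j)) (j0 : Fin r)
    (hχ : ∀ j, j ≠ j0 → ∃ χ : A →* Multiplicative ℤ, ∀ i, χ (x i) =
      Multiplicative.ofAdd (if i = j then 1 else 0))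
    (h0 : ∀ k : ℤ, x j0 ^ k = 1 → k = 0) : Function.Injective (phiHom x hx) := by
  rw [injective_iff_map_eq_one]
  intro b hb
  have h1 : ∀ j, j ≠ j0 → b.toAdd j = 0 := by
    intro j hj
    obtain ⟨χ, h⟩ := hχ j hj
    have := phi_eval x hx χ j h b
    rw [hb, map_one] at this
    exact this.symm
  have h2 : b = Multiplicative.ofAdd (Pi.single j0 (b.toAdd j0)) := by
    apply Multiplicative.toAdd.injective
    ext j
    by_cases h : j = j0
    · subst h; simp
    · simp [h, h1 j h]
  rw [h2, phi_single] at hb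
  rw [h2, h0 _ hb]
  simp

open Classical in
/-- Exponent sum of a vertex. -/
noncomputable def expo {V : Type} (Γ : SimpleGraph V) (v : V) : RAAG Γ →* Multiplicative ℤ :=
  raagLift (fun u => Multiplicative.ofAdd (if u = v then 1 else 0)) (fun _ _ _ => Commute.all _ _)

theorem abel (m r c : ℕ) (hm : 3 ≤ m) (hr : 2 * r + c < m) (x0 : GG (cycleGraph m))
    (hx0 : ∀ k : ℤ, x0 ^ k = 1 → k = 0)
    (hcomm : ∀ v : Fin m, c + 2 ≤ v.val → v.val ≤ 2 * r + c → Commute x0 (gen _ v))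
    (hexp : ∀ v : Fin m, c + 2 ≤ v.val → expo _ v x0 = 1) :
    ∃ φ : Multiplicative (Fin (r + 1) → ℤ) →* GG (cycleGraph m), Function.Injective φ ∧
      φ (Multiplicative.ofAdd (Pi.single 0 1)) = x0 := by
  let x : Fin (r + 1) → GG (cycleGraph m) := fun i =>
    if i = 0 then x0 else gen _ ⟨2 * i.val + c, by have := i.2; omega⟩
  have hx : Pairwise fun i j => Commute (x i) (x j) := by
    intro i j hij
    have := i.2
    have := j.2
    have hij' : i.val ≠ j.val := fun h => hij (Fin.ext h)
    have e : ∀ i : Fin (r + 1), i = 0 ↔ i.val = 0 := fun i =>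
      ⟨fun h => by rw [h]; rfl, fun h => Fin.ext h⟩
    simp only [x, e]
    split_ifs with h1 h2 h2
    · omega
    · exact hcomm _ (by simp; omega) (by simp; omega)
    · exact (hcomm _ (by simp; omega) (by simp; omega)).symm
    · apply commute_of_not
      rw [cyc_adj hm]
      simp only
      omega
  refine ⟨phiHom x hx, phi_inj x hx 0 ?_ ?_, ?_⟩
  · intro j hj
    have hj' : j.val ≠ 0 := fun h => hj (Fin.ext h)
    have := j.2
    refine ⟨expo _ ⟨2 * j.val + c, by omega⟩, fun i => ?_⟩
    by_cases hi : i = 0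
    · have hij : ¬ i = j := by rintro rfl; exact hj hi
      simp only [x, if_pos hi, if_neg hij]
      exact hexp _ (by simp; omega)
    · simp only [x, if_neg hi, expo, raagLift_gen, Fin.mk.injEq]
      congr 1
      have : (2 * i.val + c = 2 * j.val + c) ↔ i = j := by rw [Fin.ext_iff]; omega
      simp only [this]
  · simpa [x] using hx0
  · rw [phi_single]; simp [x]

end abelian

theorem finrank_pi (r : ℕ) : Module.finrank ℤ (Fin r → ℤ) = r := by simp

section main

variable {n r : ℕ}

theorem jumps_indep {M : Type} [AddCommGroup M]
    (φ : Multiplicative M →* GG (cycleGraph n)) {ρ : Fin n → ℕ}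
    (hρ : Function.Injective ρ) : ∀ u ∈ jumps φ ρ, ∀ v ∈ jumps φ ρ, ¬ (cycleGraph n).Adj u v := by
  intro u hu v hv h
  have := jumps_adj φ hρ hv hu h.ne
  exact this.2 h

theorem jumps_card (φ : Multiplicative (Fin r → ℤ) →* GG (cycleGraph n))
    (hφ : Function.Injective φ) {ρ : Fin n → ℕ} (hρ : Function.Injective ρ) (t : ℕ)
    (ht : ∀ v, ρ v < t) : r ≤ (jumps φ ρ).ncard := by
  have h := LL_rank φ hρ t
  have hb : below ρ t = Set.univ := by ext v; simp [below, ht v]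
  rw [hb, LL_univ φ hφ, Set.inter_univ, finrank_pi, finrank_bot] at h
  omega

theorem rank_le (hn : 3 ≤ n) (φ : Multiplicative (Fin r → ℤ) →* GG (cycleGraph n))
    (hφ : Function.Injective φ) : 2 * r ≤ n := by
  have h1 := jumps_card φ hφ (ρ := Fin.val) Fin.val_injective n (fun v => v.2)
  have h2 := indep_card hn (jumps_indep φ (ρ := Fin.val) Fin.val_injective)
  omega

theorem kill_comm {V : Type} {Γ : SimpleGraph V} {U : Set V}
    (hU : ∀ u ∈ U, ∀ v ∈ U, Commute (gen Γ u) (gen Γ v)) (p q : RAAG Γ) :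
    Commute (kill Γ U p) (kill Γ U q) := by
  induction p using raag_induction with
  | one => simp
  | mul a b ha hb => rw [map_mul]; exact ha.mul_left hb
  | inv a ha => rw [map_inv]; exact ha.inv_left
  | hgen u =>
    induction q using raag_induction with
    | one => simp
    | mul a b ha hb => rw [map_mul]; exact ha.mul_right hb
    | inv a ha => rw [map_inv]; exact ha.inv_right
    | hgen v =>
      by_cases hu : u ∈ U
      · by_cases hv : v ∈ U
        · rw [kill_gen_mem hu, kill_gen_mem hv]; exact hU u hu v hv
        · rw [kill_gen_not hv]; simp
      · rw [kill_gen_not hu]; simp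

theorem even_case (k : ℕ) (hk : 2 ≤ k)
    (φ : Multiplicative (Fin k → ℤ) →* GG (cycleGraph (2 * k)))
    (hφ : Function.Injective φ) (e : Fin k → ℤ) (he : e ≠ 0) (p q : GG (cycleGraph (2 * k)))
    (hpq : φ (Multiplicative.ofAdd e) = p * q * p⁻¹ * q⁻¹) : False := by
  have hn : 3 ≤ 2 * k := by omega
  let E : Set (Fin (2 * k)) := {i | i.val % 2 = 0}
  let O : Set (Fin (2 * k)) := {i | i.val % 2 = 1}
  let o : Fin (2 * k) := ⟨1, by omega⟩
  have heq : ∀ U : Set (Fin (2 * k)), (∀ u ∈ U, ∀ v ∈ U, ¬ (cycleGraph (2 * k)).Adj u v) →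
      LL φ U ≠ ⊥ := by
    intro U hU hbot
    apply he
    have : e ∈ LL φ U := by
      rw [mem_LL, hpq]
      have := kill_comm (fun u hu v hv => commute_of_not (hU u hu v hv)) p q
      simp only [map_mul, map_inv]
      rw [this.eq]
      group
    rwa [hbot, Submodule.mem_bot] at this
  have hE : LL φ E ≠ ⊥ := by
    apply heq
    intro u hu v hv
    have hu : u.val % 2 = 0 := hu
    have hv : v.val % 2 = 0 := hv
    rw [cyc_adj hn]
    omega
  have hO : LL φ O ≠ ⊥ := by
    apply heq
    intro u hu v hv
    have hu : u.val % 2 = 1 := hu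
    have hv : v.val % 2 = 1 := hv
    rw [cyc_adj hn]
    omega
  have htype : ∀ ρ : Fin (2 * k) → ℕ, Function.Injective ρ → ∀ t, (∀ v, ρ v < t) →
      jumps φ ρ = E ∨ jumps φ ρ = O := by
    intro ρ hρ t ht
    apply indep_max hn (jumps_indep φ hρ)
    have := jumps_card φ hφ hρ t ht
    omega
  have htop : ∀ ρ : Fin (2 * k) → ℕ, ∀ t, (∀ v, ρ v < t) → LL φ (below ρ t) = ⊥ := by
    intro ρ t ht
    have hb : below ρ t = Set.univ := by ext v; simp [below, ht v]
    rw [hb, LL_univ φ hφ]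
  have hzero : ∀ ρ : Fin (2 * k) → ℕ, LL φ (below ρ 0) = ⊤ := by
    intro ρ
    have : below ρ 0 = ∅ := by ext; simp [below]
    rw [this, LL_empty]
  -- odds first, then evens
  have hOtop : LL φ O = ⊤ := by
    let ρ : Fin (2 * k) → ℕ := fun v => if v.val % 2 = 1 then v.val else 2 * k + v.val
    have hinj : Function.Injective ρ := by
      intro u v h
      have := u.2
      have := v.2
      apply Fin.ext
      simp only [ρ] at h
      split_ifs at h <;> omega
    have hlt : ∀ v, ρ v < 4 * k := by
      intro v
      have := v.2
      simp only [ρ]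
      split_ifs <;> omega
    have hb : below ρ (2 * k) = O := by
      ext v
      have := v.2
      simp only [below, O, ρ, Set.mem_ofPred_eq]
      split_ifs <;> omega
    rcases htype ρ hinj _ hlt with hT | hT
    · rw [← hb, ← LL_const φ (ρ := ρ) (Nat.zero_le (2 * k)), hzero]
      intro v hv _ hv'
      rw [hT] at hv
      have hv : v.val % 2 = 0 := hv
      simp only [ρ] at hv'
      split_ifs at hv' <;> omega
    · exfalso
      apply hO
      rw [← hb, LL_const φ (ρ := ρ) (show 2 * k ≤ 4 * k by omega), htop ρ _ hlt]
      intro v hv hv' _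
      rw [hT] at hv
      have hv : v.val % 2 = 1 := hv
      have := v.2
      simp only [ρ] at hv'
      split_ifs at hv' <;> omega
  -- evens first, then the vertex 1, then the other odds
  have hrank : LL φ (insert o E) ≠ ⊥ := by
    let ρ : Fin (2 * k) → ℕ := fun v => if v.val % 2 = 0 then v.val else
      if v.val = 1 then 2 * k else 2 * k + v.val
    have hinj : Function.Injective ρ := by
      intro u v h
      have := u.2
      have := v.2
      apply Fin.ext
      simp only [ρ] at h
      split_ifs at h <;> omega
    have hlt : ∀ v, ρ v < 4 * k := by
      intro v
      have := v.2
      simp only [ρ]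
      split_ifs <;> omega
    have hb : below ρ (2 * k) = E := by
      ext v
      have := v.2
      simp only [below, E, ρ, Set.mem_ofPred_eq]
      split_ifs <;> omega
    have hb' : below ρ (2 * k + 1) = insert o E := by
      ext v
      have := v.2
      simp only [below, E, o, ρ, Set.mem_ofPred_eq, Set.mem_insert_iff, Fin.ext_iff]
      split_ifs <;> omega
    rcases htype ρ hinj _ hlt with hT | hT
    · exfalso
      apply hE
      rw [← hb, LL_const φ (ρ := ρ) (show 2 * k ≤ 4 * k by omega), htop ρ _ hlt]
      intro v hv hv' _
      rw [hT] at hv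
      have hv : v.val % 2 = 0 := hv
      have := v.2
      simp only [ρ] at hv'
      split_ifs at hv'
      omega
    · have h := LL_rank φ hinj (2 * k + 1)
      rw [hb', hT, finrank_pi] at h
      have h2 : O ∩ insert o E ⊆ {o} := by
        rintro v ⟨hv, hv' | hv'⟩
        · exact hv'
        · have hv : v.val % 2 = 1 := hv
          have hv' : v.val % 2 = 0 := hv'
          omega
      have h3 := Set.ncard_le_ncard h2 (Set.toFinite _)
      rw [Set.ncard_singleton] at h3
      intro hbot
      rw [hbot, finrank_bot] at h
      omega
  -- the vertex 1, then the evens, then the other odds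
  let ρ : Fin (2 * k) → ℕ := fun v => if v.val = 1 then 0 else
    if v.val % 2 = 0 then v.val + 1 else 2 * k + 1 + v.val
  have hinj : Function.Injective ρ := by
    intro u v h
    have := u.2
    have := v.2
    apply Fin.ext
    simp only [ρ] at h
    split_ifs at h <;> omega
  have hlt : ∀ v, ρ v < 4 * k + 1 := by
    intro v
    have := v.2
    simp only [ρ]
    split_ifs <;> omega
  have hb : below ρ (2 * k + 1) = insert o E := by
    ext v
    have := v.2
    simp only [below, E, o, ρ, Set.mem_ofPred_eq, Set.mem_insert_iff, Fin.ext_iff]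
    split_ifs <;> omega
  rcases htype ρ hinj _ hlt with hT | hT
  · apply hrank
    rw [← hb, LL_const φ (ρ := ρ) (show 2 * k + 1 ≤ 4 * k + 1 by omega), htop ρ _ hlt]
    intro v hv hv' _
    rw [hT] at hv
    have hv : v.val % 2 = 0 := hv
    have := v.2
    simp only [ρ] at hv'
    split_ifs at hv' <;> omega
  · have ho : o ∈ jumps φ ρ := by
      rw [hT]; simp [O, o]
    apply ho
    have hρo : ρ o = 0 := by simp [ρ, o]
    rw [hρo, hzero, eq_comm, eq_top_iff, ← hOtop]
    apply LL_anti
    intro v hv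
    have hv : ρ v < 1 := hv
    have h1 : v.val = 1 := by
      simp only [ρ] at hv
      split_ifs at hv <;> omega
    simp [O, h1]

theorem no_embed (m n : ℕ) (hn : 3 ≤ n) (hmn : n < m)
    (ψ : GG (cycleGraph m) →* GG (cycleGraph n)) (hψ : Function.Injective ψ) : False := by
  obtain ⟨k, hk⟩ := Nat.even_or_odd' n
  rcases hk with rfl | rfl
  · obtain ⟨r, rfl⟩ : ∃ r, k = r + 1 := ⟨k - 1, by omega⟩
    let g0 : GG (cycleGraph m) := gen _ ⟨0, by omega⟩
    let g1 : GG (cycleGraph m) := gen _ ⟨1, by omega⟩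
    obtain ⟨φ, hφ, hφ0⟩ := abel m r 1 (by omega) (by omega) (g0 * g1 * g0⁻¹ * g1⁻¹) (by
      let f : GG (cycleGraph m) →* FreeGroup Bool := raagLift (fun u =>
        if u.val = 0 then FreeGroup.of true else if u.val = 1 then FreeGroup.of false else 1) (by
          intro u v huv
          rw [compl_adj, cyc_adj (by omega), Ne, Fin.ext_iff] at huv
          split_ifs <;> first | simp | omega)
      intro j hj
      have h1 := congrArg f hj
      have hf0 : f g0 = FreeGroup.of true := by simp [f, g0]
      have hf1 : f g1 = FreeGroup.of false := by simp [f, g1]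
      rw [map_zpow, map_mul, map_mul, map_mul, map_inv, map_inv, hf0, hf1, map_one] at h1
      by_contra hne
      have h2 := (IsMulTorsionFree.zpow_eq_one_iff_left hne).1 h1
      rw [mul_inv_eq_one, mul_inv_eq_iff_eq_mul] at h2
      exact absurd (free_of_comm h2) (by decide)) (by
      intro v h1 h2
      have hc0 : Commute g0 (gen _ v) := by
        apply commute_of_not
        rw [cyc_adj (by omega)]
        simp only
        omega
      have hc1 : Commute g1 (gen _ v) := by
        apply commute_of_not
        rw [cyc_adj (by omega)]
        simp only
        omega
      exact ((hc0.mul_left hc1).mul_left hc0.inv_left).mul_left hc1.inv_left) (by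
      intro v _
      simp only [map_mul, map_inv]
      rw [mul_comm (expo _ v g0)]
      group)
    refine even_case (r + 1) (by omega) (ψ.comp φ) (hψ.comp hφ) (Pi.single 0 1) ?_
      (ψ g0) (ψ g1) ?_
    · intro h
      have := congrFun h 0
      simp at this
    · rw [MonoidHom.comp_apply, hφ0]
      simp
  · obtain ⟨φ, hφ, -⟩ := abel m k 0 (by omega) (by omega) (gen _ ⟨0, by omega⟩) (by
      intro j hj
      have := congrArg (expo _ ⟨0, by omega⟩) hj
      rw [map_zpow, map_one] at this
      simpa [expo, ← ofAdd_zsmul] using this) (by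
      intro v h1 h2
      apply commute_of_not
      rw [cyc_adj (by omega)]
      simp only
      omega) (by
      intro v h1
      have : (⟨0, by omega⟩ : Fin m) ≠ v := by
        intro h
        rw [← h] at h1
        simp at h1
      simp [expo, this])
    have := rank_le hn (ψ.comp φ) (hψ.comp hφ)
    omega

end main

end RaagCycle

/-- `G(C_m) ↪ G(C_n)` iff `m ≤ n`, for `m, n ≥ 3`. -/
theorem statement4 (m n : ℕ) (hm : 3 ≤ m) (hn : 3 ≤ n) :
    (∃ φ : GG (cycleGraph m) →* GG (cycleGraph n), Function.Injective φ) ↔ m ≤ n := by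
  constructor
  · rintro ⟨φ, hφ⟩
    by_contra h
    exact RaagCycle.no_embed m n hn (by omega) φ hφ
  · exact RaagCycle.embed_le m n hm
end
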